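/- For every n ≥ 1, Q_n(x,y,z,t) = Σ_{T ∈ O_{n+1}} x^{young_T(1)-1} t^{eld(T)} y^{impe(T)} z^{n - young_T(1) - eld(T) - impe(T)}, where the sum is over all planar trees of size n+1 rooted at 1. -/

import Mathlib

noncomputable section

open MvPolynomial Function

/-! ### The polynomial sequences -/

/-- The generalized Ramanujan polynomials `Q n`, in the variables
`x = X 0`, `y = X 1`, `z = X 2`, `t = X 3`:
`Q 1 = 1` and `Q (n+1) = (x + n z + n (y+t)) Q n + (y+t) y ∂_y (Q n)` for `n ≥ 1`. -/
def Qpoly : ℕ → MvPolynomial (Fin 4) ℚ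
  | 0 => 1
  | 1 => 1
  | n + 2 =>
      (X 0 + C ((n : ℚ) + 1) * X 2 + C ((n : ℚ) + 1) * (X 1 + X 3)) * Qpoly (n + 1)
        + (X 1 + X 3) * (X 1 * pderiv 1 (Qpoly (n + 1)))

/-- `R n (x,y,z,t) = Q n (x, y+1, z, t-1)`. -/
def Rpoly (n : ℕ) : MvPolynomial (Fin 4) ℚ :=
  bind₁ (fun i : Fin 4 => if i = 1 then X 1 + 1 else if i = 3 then X 3 - 1 else X i) (Qpoly n)

/-- `H 1 = 1` and `H (n+1) = (2n-1+(n+1)y) H n + (1+y)^2 H n'` for `n ≥ 1`. -/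
def Hpoly : ℕ → Polynomial ℚ
  | 0 => 1
  | 1 => 1
  | n + 2 =>
      (Polynomial.C (2 * (n : ℚ) + 1) + Polynomial.C ((n : ℚ) + 2) * Polynomial.X)
          * Hpoly (n + 1)
        + (1 + Polynomial.X) ^ 2 * Polynomial.derivative (Hpoly (n + 1))

/-- The Ramanujan polynomials, in the variables `x = X 0`, `y = X 1`:
`P 1 = 1` and `P (n+1) = (x + n + n y) P n + y^2 ∂_y (P n)` for `n ≥ 1`. -/
def Ppoly : ℕ → MvPolynomial (Fin 2) ℚ
  | 0 => 1
  | 1 => 1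
  | n + 2 =>
      (X 0 + C ((n : ℚ) + 1) * (1 + X 1)) * Ppoly (n + 1)
        + X 1 ^ 2 * pderiv 1 (Ppoly (n + 1))

/-- `C 1 = 1` and `C (n+1) = n (1+y) C n + y^2 C n'` for `n ≥ 1`. -/
def Cpoly : ℕ → Polynomial ℚ
  | 0 => 1
  | 1 => 1
  | n + 2 =>
      Polynomial.C ((n : ℚ) + 1) * (1 + Polynomial.X) * Cpoly (n + 1)
        + Polynomial.X ^ 2 * Polynomial.derivative (Cpoly (n + 1))

/-! ### Cayley trees

A Cayley tree of size `n`, rooted at the vertex with label `1`, is encoded by its parent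
function on `Fin n` (vertex `v` carries label `v+1`; the root is the vertex with value `0`).
The root is a fixed point and every vertex reaches the root by iterating the parent map. -/

def CayleyTree (n : ℕ) : Type :=
  {p : Fin n → Fin n //
    (∀ v, v.val = 0 → p v = v) ∧ ∀ v : Fin n, ∃ k, k < n ∧ (p^[k] v).val = 0}

noncomputable instance (n : ℕ) : Fintype (CayleyTree n) := by
  unfold CayleyTree; exact Fintype.ofFinite _

namespace CayleyTree

variable {n : ℕ} (T : CayleyTree n)

/-- `Desc T v a` : `v` is a descendant of `a` (including `a` itself). -/
def Desc (v a : Fin n) : Prop := ∃ k, T.1^[k] v = a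

/-- `β_T(a)` : the smallest label among the descendants of `a`, as a 0-based index. -/
def beta (a : Fin n) : ℕ := sInf {j : ℕ | ∃ v : Fin n, v.val = j ∧ T.Desc v a}

/-- The edge from `c` to its parent is improper: `λ(parent c) > β(c)`. -/
def ImproperEdge (c : Fin n) : Prop := c.val ≠ 0 ∧ T.beta c < (T.1 c).val

/-- The number of improper edges. -/
def impe : ℕ := {c : Fin n | T.ImproperEdge c}.ncard

/-- `a` is an improper parent, i.e. `β_T(a) ≠ λ_T(a)`. -/
def ImproperParent (a : Fin n) : Prop := T.beta a ≠ a.val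

/-- The number of improper parents. -/
def impp : ℕ := {a : Fin n | T.ImproperParent a}.ncard

/-- The degree of the root (= its number of children). -/
def degRoot : ℕ := {c : Fin n | c.val ≠ 0 ∧ (T.1 c).val = 0}.ncard

/-- The length of the greater ancestors path of `i` : the largest `k` such that all the
ancestors `p^[l] i`, `l ≤ k`, have a label `≥ λ(i)`. -/
def bapLen (i : Fin n) : ℕ := Nat.findGreatest (fun k => ∀ l ≤ k, i ≤ T.1^[l] i) n

/-- `i` is a leading vertex: `β_T(a_p) = λ_T(i)` where `a_p` is the top of the greater
ancestors path of `i`. -/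
def Leading (i : Fin n) : Prop := T.beta (T.1^[T.bapLen i] i) = i.val

/-- The number of leading vertices. -/
def lead : ℕ := {i : Fin n | T.Leading i}.ncard

end CayleyTree

/-! ### Greg trees

A Greg tree of size `n`, rooted at the vertex with label `1`, has labelled vertices `Fin n`
(vertex `Sum.inl v` carries label `v+1`) and unlabelled vertices `Fin m`, each of degree at
least `3`.  It is encoded by its parent function.  To make the encoding canonical, the
unlabelled vertices are required to be indexed in increasing order of the pair
`(β, depth)` (this pair is distinct for distinct unlabelled vertices, so every abstract Greg
tree admits exactly one such encoding). -/

/-- The root: the labelled vertex with label `1` (value `0`). -/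
def gregRoot {n m : ℕ} (v : Fin n ⊕ Fin m) : Prop := ∃ w : Fin n, w.val = 0 ∧ v = Sum.inl w

namespace GregRaw

variable {n m : ℕ} (p : Fin n ⊕ Fin m → Fin n ⊕ Fin m)

/-- `v` is a descendant of `a` (including `a` itself). -/
def Desc (v a : Fin n ⊕ Fin m) : Prop := ∃ k, p^[k] v = a

/-- `β(a)` : smallest label among the descendants of `a`, as a 0-based index. -/
def beta (a : Fin n ⊕ Fin m) : ℕ :=
  sInf {j : ℕ | ∃ w : Fin n, w.val = j ∧ Desc p (Sum.inl w) a}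

/-- Distance from `v` to the root. -/
def depth (v : Fin n ⊕ Fin m) : ℕ := sInf {k : ℕ | gregRoot (p^[k] v)}

/-- Sorting key for unlabelled vertices: the pair `(β, depth)` encoded as a number. -/
def key (u : Fin m) : ℕ := beta p (Sum.inr u) * (n + m + 1) + depth p (Sum.inr u)

/-- The set of children of a vertex. -/
def children (a : Fin n ⊕ Fin m) : Set (Fin n ⊕ Fin m) := {w | w ≠ a ∧ p w = a}

end GregRaw

/-- The conditions making a parent function on `Fin n ⊕ Fin m` a (canonically encoded)
Greg tree: the root is a fixed point, every vertex reaches the root, every unlabelled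
vertex has at least two children (hence, having also a parent, degree at least `3`),
and unlabelled vertices are indexed in increasing order of `(β, depth)`. -/
def GregCond (n m : ℕ) (p : Fin n ⊕ Fin m → Fin n ⊕ Fin m) : Prop :=
  (∀ v, gregRoot v → p v = v) ∧
  (∀ v, ∃ k, k < n + m ∧ gregRoot (p^[k] v)) ∧
  (∀ u : Fin m, 2 ≤ (GregRaw.children p (Sum.inr u)).ncard) ∧
  (∀ u w : Fin m, u < w ↔ GregRaw.key p u < GregRaw.key p w)

/-- Greg trees of size `n` rooted at `1`.  (The number of unlabelled vertices of a Greg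
tree with `n` labelled vertices is always at most `n`, so the bound `m ≤ n` does not
exclude any Greg tree.) -/
def GregTree (n : ℕ) : Type :=
  Σ m : Fin (n + 1), {p : Fin n ⊕ Fin m.val → Fin n ⊕ Fin m.val // GregCond n m.val p}

noncomputable instance (n : ℕ) : Fintype (GregTree n) := by
  unfold GregTree; exact Fintype.ofFinite _

namespace GregTree

variable {n : ℕ} (T : GregTree n)

/-- The number of unlabelled vertices. -/
def unl : ℕ := T.1.val

/-- `β_T`. -/
def beta (a : Fin n ⊕ Fin T.1.val) : ℕ := GregRaw.beta T.2.1 a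

/-- The labelled vertex `a` is an improper parent, i.e. `β_T(a) ≠ λ_T(a)`. -/
def ImproperParent (a : Fin n) : Prop := T.beta (Sum.inl a) ≠ a.val

/-- The number of improper parents. -/
def impp : ℕ := {a : Fin n | T.ImproperParent a}.ncard

/-- The degree of the root (= its number of children). -/
def degRoot : ℕ :=
  {w : Fin n ⊕ Fin T.1.val | ¬gregRoot w ∧ gregRoot (T.2.1 w)}.ncard

/-- The length of the greater ancestors path of the labelled vertex `i` : the largest `k`
such that all labelled vertices among the ancestors `p^[l] (inl i)`, `l ≤ k`, have a label
`≥ λ(i)`. -/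
def bapLen (i : Fin n) : ℕ :=
  Nat.findGreatest
    (fun k => ∀ l ≤ k, ∀ j : Fin n, T.2.1^[l] (Sum.inl i) = Sum.inl j → i ≤ j)
    (n + T.1.val)

/-- The labelled vertex `i` is a leading vertex. -/
def Leading (i : Fin n) : Prop := T.beta (T.2.1^[T.bapLen i] (Sum.inl i)) = i.val

/-- The number of leading vertices. -/
def lead : ℕ := {i : Fin n | T.Leading i}.ncard

end GregTree

/-! ### Planar trees

A planar tree of size `n` rooted at `1` is encoded by a parent function together with a
rank function giving each non-root vertex its position (from the left, starting at `0`)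
among the children of its parent; ranks of the children of a fixed vertex form an initial
segment of `ℕ`, so the encoding is canonical. -/

def PlanarTree (n : ℕ) : Type :=
  {pr : (Fin n → Fin n) × (Fin n → Fin n) //
    (∀ v, v.val = 0 → pr.1 v = v) ∧
    (∀ v : Fin n, ∃ k, k < n ∧ (pr.1^[k] v).val = 0) ∧
    (∀ v, v.val = 0 → (pr.2 v).val = 0) ∧
    (∀ c d, c.val ≠ 0 → d.val ≠ 0 → pr.1 c = pr.1 d → pr.2 c = pr.2 d → c = d) ∧
    (∀ c, c.val ≠ 0 → ∀ s : Fin n, s < pr.2 c →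
      ∃ d, d.val ≠ 0 ∧ pr.1 d = pr.1 c ∧ pr.2 d = s)}

noncomputable instance (n : ℕ) : Fintype (PlanarTree n) := by
  unfold PlanarTree; exact Fintype.ofFinite _

namespace PlanarTree

variable {n : ℕ} (T : PlanarTree n)

/-- `β_T(a)` : the smallest label among the descendants of `a`, as a 0-based index. -/
def beta (a : Fin n) : ℕ := sInf {j : ℕ | ∃ v : Fin n, v.val = j ∧ ∃ k, T.1.1^[k] v = a}

/-- `j` is elder: it has a brother to its right with a smaller `β`. -/
def Elder (j : Fin n) : Prop :=
  j.val ≠ 0 ∧ ∃ k : Fin n, k.val ≠ 0 ∧ T.1.1 k = T.1.1 j ∧ T.1.2 j < T.1.2 k ∧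
    T.beta k < T.beta j

/-- The number of elder vertices. -/
def eld : ℕ := {j : Fin n | T.Elder j}.ncard

/-- The edge from `c` to its parent is improper: `c` is a younger child and
`λ(parent c) > β(c)`. -/
def ImproperEdge (c : Fin n) : Prop := c.val ≠ 0 ∧ ¬T.Elder c ∧ T.beta c < (T.1.1 c).val

/-- The number of improper edges. -/
def impe : ℕ := {c : Fin n | T.ImproperEdge c}.ncard

/-- `young_T(i)` : the number of younger children of `i`. -/
def young (i : Fin n) : ℕ := {c : Fin n | c.val ≠ 0 ∧ T.1.1 c = i ∧ ¬T.Elder c}.ncard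

/-- `young_T(1)` : the number of younger children of the root. -/
def youngRoot : ℕ := {c : Fin n | c.val ≠ 0 ∧ (T.1.1 c).val = 0 ∧ ¬T.Elder c}.ncard

end PlanarTree

/-!
A planar tree is built by inserting its labels in increasing order. The largest label `m` can be
inserted in four ways, each multiplying the weight `x^{young(1)} t^{eld} y^{impe} z^{...}` of the
tree by a simple factor:

* as a leaf immediately to the left of a non-root vertex, so that `m` is elder: factor `t`;
* as the last child of a vertex, by a proper edge: factor `x` at the root and `z` elsewhere;
* in the place of a non-root vertex, which becomes the only child of `m` by an improper edge:
  factor `y`;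
* in the place of a non-root vertex `a` that has an improper edge to a child `p`: `m` takes over
  the children to the left of `p`, followed by `a` (which keeps those to the right of `p`) and `p`,
  in either order. The two orders together give the factor `y + t`.

The last case occurs once for each improper edge, and `y ∂_y` multiplies the weight of a tree by
its number of improper edges. Summing the four cases gives the recurrence for `x Q n`.
-/

/-- A plane forest with vertex labels in `α`, in first-child/next-sibling form: `cons a c s` is
the forest whose leftmost tree has root `a` above the forest `c`, followed on the right by the
forest `s`. Used recursively for the children of a vertex. -/
inductive PlaneForest (α : Type*)
  | nil : PlaneForest α
  | cons (a : α) (children siblings : PlaneForest α) : PlaneForest α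

namespace PlaneForest

variable {α : Type*}

/-- The multiset of all vertex labels of a forest. -/
def labels : PlaneForest α → Multiset α
  | nil => 0
  | cons a c s => a ::ₘ (c.labels + s.labels)

lemma mem_labels_cons {a x : α} {c s : PlaneForest α} :
    x ∈ (cons a c s).labels ↔ x = a ∨ x ∈ c.labels ∨ x ∈ s.labels := by
  simp only [labels, Multiset.mem_cons, Multiset.mem_add]

lemma nodup_labels_cons {a : α} {c s : PlaneForest α} :
    (cons a c s).labels.Nodup ↔
      (a ∉ c.labels ∧ a ∉ s.labels) ∧ c.labels.Nodup ∧ s.labels.Nodup ∧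
        Disjoint c.labels s.labels := by
  simp only [labels, Multiset.nodup_cons, Multiset.mem_add, not_or, Multiset.nodup_add]

lemma labels_eq_zero {F : PlaneForest α} : F.labels = 0 ↔ F = nil := by
  cases F <;> simp [labels]

section LinearOrder

variable [LinearOrder α]

/-- The smallest label of a forest, `⊤` for the empty forest. -/
def minLabel (F : PlaneForest α) : WithTop α := (F.labels.map WithTop.some).inf

/-- The smallest label `β` of the tree with root `a` above the forest `c`. -/
def beta (a : α) (c : PlaneForest α) : WithTop α := a ⊓ c.minLabel

@[simp] lemma minLabel_nil : (nil : PlaneForest α).minLabel = ⊤ := by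
  simp [minLabel, labels]

@[simp] lemma minLabel_cons (a : α) (c s : PlaneForest α) :
    (cons a c s).minLabel = beta a c ⊓ s.minLabel := by
  simp [minLabel, labels, beta, inf_assoc]

@[simp] lemma beta_nil (a : α) : beta a nil = a := by simp [beta]

lemma minLabel_of_labels_eq_cons {a : α} {F G : PlaneForest α} (h : G.labels = a ::ₘ F.labels) :
    G.minLabel = ↑a ⊓ F.minLabel := by
  simp [minLabel, h]

lemma le_minLabel_iff {F : PlaneForest α} {b : WithTop α} :
    b ≤ F.minLabel ↔ ∀ x ∈ F.labels, b ≤ x := by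
  simp [minLabel, Multiset.le_inf]

lemma minLabel_eq_top_or_mem (F : PlaneForest α) :
    F.minLabel = ⊤ ∨ ∃ x ∈ F.labels, F.minLabel = x := by
  induction F with
  | nil => exact Or.inl minLabel_nil
  | cons a c s ihc ihs =>
    rw [minLabel_cons, beta]
    have := min_choice ((a : WithTop α) ⊓ c.minLabel) s.minLabel
    have := min_choice (a : WithTop α) c.minLabel
    simp only [mem_labels_cons]
    grind

lemma beta_le (a : α) (c : PlaneForest α) : beta a c ≤ a := inf_le_left

lemma beta_eq_coe (a : α) (c : PlaneForest α) :
    ∃ x, (x = a ∨ x ∈ c.labels) ∧ beta a c = x := by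
  rcases min_choice (a : WithTop α) c.minLabel with h | h
  · exact ⟨a, Or.inl rfl, h⟩
  · rcases c.minLabel_eq_top_or_mem with htop | ⟨x, hx, hxc⟩
    · exact ⟨a, Or.inl rfl, by rw [beta, htop, inf_top_eq]⟩
    · exact ⟨x, Or.inr hx, h.trans hxc⟩

lemma beta_ne_minLabel {a : α} {c s : PlaneForest α} (h : (cons a c s).labels.Nodup) :
    beta a c ≠ s.minLabel := by
  obtain ⟨⟨-, has⟩, -, -, hcs⟩ := nodup_labels_cons.1 h
  obtain ⟨x, hx, hxb⟩ := beta_eq_coe a c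
  rintro hb
  rcases s.minLabel_eq_top_or_mem with htop | ⟨y, hy, hys⟩
  · exact WithTop.coe_ne_top (hxb.symm.trans (hb.trans htop))
  · obtain rfl : x = y := WithTop.coe_injective (hxb.symm.trans (hb.trans hys))
    rcases hx with rfl | hx
    · exact has hy
    · exact Multiset.disjoint_left.1 hcs hx hy

/-- The edge from `v` to a child with smallest descendant label `b` is improper, where `r` is the
smallest label to the right of that child: the child is younger (`b ≤ r`) and `b < v`. -/
abbrev IsImproper (v : α) (b r : WithTop α) : Prop := b ≤ r ∧ b < v

/-- The number of improper edges from `v` to its children, the roots of the forest. -/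
def rootImproper (v : α) : PlaneForest α → ℕ
  | nil => 0
  | cons a c s => (if IsImproper v (beta a c) s.minLabel then 1 else 0) + s.rootImproper v

/-- The number of improper edges inside the forest. -/
def innerImproper : PlaneForest α → ℕ
  | nil => 0
  | cons a c s => c.rootImproper a + c.innerImproper + s.innerImproper

lemma rootImproper_eq_zero {v : α} {F : PlaneForest α} (hv : ∀ x ∈ F.labels, v < x) :
    F.rootImproper v = 0 := by
  induction F with
  | nil => rfl
  | cons a c s _ ihs =>
    have hvb : (v : WithTop α) ≤ beta a c := by
      obtain ⟨x, hx, hxb⟩ := beta_eq_coe a c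
      rw [hxb, WithTop.coe_le_coe]
      exact (hv x (mem_labels_cons.2 (by tauto))).le
    simp [rootImproper, hvb.not_gt, ihs fun x hx => hv x (mem_labels_cons.2 (by tauto))]

/-! ### Insertion of the largest label -/

section Insertion

/-- The forests obtained by splitting the vertex `a` with children `c` in two at an improper edge:
`a` keeps only the children to the right of that edge and becomes a sibling, on either side, of
the child `p` below the edge; the children to the left of the edge are left of both. -/
def splits (a : α) : PlaneForest α → Multiset (PlaneForest α)
  | nil => 0
  | cons p d s =>
    (if IsImproper a (beta p d) s.minLabel then
      {cons p d (cons a s nil), cons a s (cons p d nil)} else 0) + (s.splits a).map (cons p d)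

/-- The forests of children that a new vertex may receive when it takes the place of the
vertex `a` with children `c`. -/
def expansions (a : α) (c : PlaneForest α) : Multiset (PlaneForest α) :=
  cons a c nil ::ₘ c.splits a

/-- The forests obtained from a forest by inserting a new vertex `m`: as a new leaf (immediately
to the left of some vertex, or as the last child of some vertex or of the invisible root), or in
the place of some vertex. -/
def insertions (m : α) : PlaneForest α → Multiset (PlaneForest α)
  | nil => {cons m nil nil}
  | cons a c s =>
    cons m nil (cons a c s) ::ₘ ((c.insertions m).map (fun c' => cons a c' s) +
      (s.insertions m).map (cons a c) + (expansions a c).map (fun w => cons m w s))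

lemma labels_of_mem_splits {a : α} {c w : PlaneForest α} (h : w ∈ c.splits a) :
    w.labels = a ::ₘ c.labels := by
  induction c generalizing w with
  | nil => simp [splits] at h
  | cons p d s _ ih =>
    simp only [splits, Multiset.mem_add, Multiset.mem_map] at h
    rcases h with h | ⟨w, hw, rfl⟩
    · split_ifs at h
      · simp only [Multiset.insert_eq_cons, Multiset.mem_cons, Multiset.mem_singleton] at h
        rcases h with rfl | rfl <;> simp only [labels, ← Multiset.singleton_add] <;> abel
      · simp at h
    · simp only [labels, ih hw, ← Multiset.singleton_add]
      abel

lemma labels_of_mem_expansions {a : α} {c w : PlaneForest α} (h : w ∈ expansions a c) :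
    w.labels = a ::ₘ c.labels := by
  rcases Multiset.mem_cons.1 h with rfl | h
  · simp [labels]
  · exact labels_of_mem_splits h

lemma labels_of_mem_insertions {m : α} {F G : PlaneForest α} (h : G ∈ F.insertions m) :
    G.labels = m ::ₘ F.labels := by
  induction F generalizing G with
  | nil => simp_all [insertions, labels]
  | cons a c s ihc ihs =>
    simp only [insertions, Multiset.mem_add, Multiset.mem_map, Multiset.mem_cons] at h
    rcases h with rfl | (⟨c', h, rfl⟩ | ⟨s', h, rfl⟩) | ⟨w, h, rfl⟩
    · simp [labels]
    · simp only [labels, ihc h, ← Multiset.singleton_add]; abel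
    · simp only [labels, ihs h, ← Multiset.singleton_add]; abel
    · simp only [labels, labels_of_mem_expansions h, ← Multiset.singleton_add]; abel

lemma minLabel_lt_of_mem_splits {a : α} {c w : PlaneForest α} (h : w ∈ c.splits a) :
    c.minLabel < a := by
  induction c generalizing w with
  | nil => simp [splits] at h
  | cons p d s _ ih =>
    simp only [splits, Multiset.mem_add, Multiset.mem_map] at h
    rw [minLabel_cons, inf_lt_iff]
    rcases h with h | ⟨w, hw, rfl⟩
    · split_ifs at h with himp
      · exact Or.inl himp.2
      · simp at h
    · exact Or.inr (ih hw)

lemma minLabel_of_mem_splits {a : α} {c w : PlaneForest α} (h : w ∈ c.splits a) :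
    w.minLabel = c.minLabel := by
  rw [minLabel_of_labels_eq_cons (labels_of_mem_splits h),
    inf_eq_right.2 (minLabel_lt_of_mem_splits h).le]

lemma beta_of_mem_expansions {a m : α} {c w : PlaneForest α} (ham : a < m)
    (h : w ∈ expansions a c) : beta m w = beta a c := by
  rw [beta, minLabel_of_labels_eq_cons (labels_of_mem_expansions h)]
  exact inf_eq_right.2 ((beta_le a c).trans (WithTop.coe_le_coe.2 ham.le))

lemma beta_of_mem_insertions {a m : α} {c c' : PlaneForest α} (ham : a < m)
    (h : c' ∈ c.insertions m) : beta a c' = beta a c := by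
  rw [beta, minLabel_of_labels_eq_cons (labels_of_mem_insertions h), inf_left_comm]
  exact inf_eq_right.2 ((beta_le a c).trans (WithTop.coe_le_coe.2 ham.le))

section Weight

variable {R : Type*} (y t : R) (z : α → R)

/-- The weight of a child of `v` with smallest descendant label `b` and smallest label `r` to its
right: `t` for an elder child, `y` for the end of an improper edge and `z v` otherwise. -/
def vertexWeight (v : α) (b r : WithTop α) : R :=
  if r < b then t else if b < v then y else z v

variable {y t z}

lemma vertexWeight_of_lt {v : α} {b r : WithTop α} (h : r < b) :
    vertexWeight y t z v b r = t := if_pos h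

lemma vertexWeight_of_isImproper {v : α} {b r : WithTop α} (h : IsImproper v b r) :
    vertexWeight y t z v b r = y := by
  rw [vertexWeight, if_neg h.1.not_gt, if_pos h.2]

lemma vertexWeight_coe_inf {v m : α} {b r : WithTop α} (hb : b < m) :
    vertexWeight y t z v b (↑m ⊓ r) = vertexWeight y t z v b r := by
  simp [vertexWeight, hb.not_gt]

variable [CommSemiring R]

variable (y t z) in
/-- The product of the vertex weights of a forest whose roots are the children of `v`. -/
def weight (v : α) : PlaneForest α → R
  | nil => 1
  | cons a c s => vertexWeight y t z v (beta a c) s.minLabel * (c.weight a * s.weight v)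

lemma weight_cons_of_mem_splits {a m p : α} {d s w : PlaneForest α} (ham : a < m)
    (hw : w ∈ s.splits a) :
    (cons p d w).weight y t z m =
      vertexWeight y t z a (beta p d) s.minLabel * d.weight y t z p * w.weight y t z m := by
  have hsa := minLabel_lt_of_mem_splits hw
  rw [weight, minLabel_of_mem_splits hw, mul_assoc]
  congr 1
  rcases lt_or_ge s.minLabel (beta p d) with h | h
  · rw [vertexWeight_of_lt h, vertexWeight_of_lt h]
  · have hba := h.trans_lt hsa
    rw [vertexWeight_of_isImproper ⟨h, hba.trans (WithTop.coe_lt_coe.2 ham)⟩,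
      vertexWeight_of_isImproper ⟨h, hba⟩]

lemma weight_add_weight_of_isImproper {a m p : α} {d s : PlaneForest α} (ham : a < m)
    (hne : beta p d ≠ s.minLabel) (h : IsImproper a (beta p d) s.minLabel) :
    (cons p d (cons a s nil)).weight y t z m + (cons a s (cons p d nil)).weight y t z m =
      (y + t) * (cons p d s).weight y t z a := by
  have ham' : (a : WithTop α) < m := WithTop.coe_lt_coe.2 ham
  have hlt : beta p d < beta a s := lt_inf_iff.2 ⟨h.2, lt_of_le_of_ne h.1 hne⟩
  have hp : ∀ r, beta p d ≤ r → vertexWeight y t z m (beta p d) r = y := fun r hr =>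
    vertexWeight_of_isImproper ⟨hr, h.2.trans ham'⟩
  have ha : vertexWeight y t z m (beta a s) ⊤ = y :=
    vertexWeight_of_isImproper ⟨le_top, (beta_le a s).trans_lt ham'⟩
  simp only [weight, minLabel_cons, minLabel_nil, inf_top_eq, hp _ hlt.le, hp _ le_top, ha,
    vertexWeight_of_lt hlt, vertexWeight_of_isImproper h]
  ring

lemma sum_weight_splits {a m : α} {c : PlaneForest α} (ham : a < m) (hc : c.labels.Nodup) :
    ((c.splits a).map (weight y t z m)).sum = c.rootImproper a * (y + t) * c.weight y t z a := by
  induction c with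
  | nil => simp [splits, rootImproper]
  | cons p d s _ ih =>
    obtain ⟨-, -, hs, -⟩ := nodup_labels_cons.1 hc
    have hrest : ((s.splits a).map fun w => (cons p d w).weight y t z m).sum =
        s.rootImproper a * (y + t) * (cons p d s).weight y t z a := by
      rw [Multiset.map_congr rfl fun w hw => weight_cons_of_mem_splits ham hw,
        Multiset.sum_map_mul_left, ih hs, weight]
      ring
    by_cases h : IsImproper a (beta p d) s.minLabel
    · simp only [splits, if_pos h, rootImproper, Multiset.map_add, Multiset.sum_add,
        Multiset.map_map, Function.comp_def, Multiset.insert_eq_cons, Multiset.map_cons,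
        Multiset.map_singleton, Multiset.sum_cons, Multiset.sum_singleton, hrest,
        weight_add_weight_of_isImproper ham (beta_ne_minLabel hc) h]
      push_cast
      ring
    · simp only [splits, if_neg h, rootImproper, zero_add, Multiset.map_map, Function.comp_def,
        hrest]

lemma sum_weight_expansions {a m : α} {c : PlaneForest α} (ham : a < m) (hc : c.labels.Nodup) :
    ((expansions a c).map (weight y t z m)).sum =
      (y + c.rootImproper a * (y + t)) * c.weight y t z a := by
  have hb : IsImproper m (beta a c) ⊤ :=
    ⟨le_top, (beta_le a c).trans_lt (WithTop.coe_lt_coe.2 ham)⟩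
  rw [expansions, Multiset.map_cons, Multiset.sum_cons, sum_weight_splits ham hc, weight,
    minLabel_nil, vertexWeight_of_isImproper hb, weight]
  ring

lemma weight_leaf_cons {m v a : α} {c s : PlaneForest α} (ham : a < m) :
    (cons m nil (cons a c s)).weight y t z v = t * (cons a c s).weight y t z v := by
  have hlt : (cons a c s).minLabel < beta m nil := by
    rw [minLabel_cons, beta_nil, inf_lt_iff]
    exact Or.inl ((beta_le a c).trans_lt (WithTop.coe_lt_coe.2 ham))
  rw [weight, vertexWeight_of_lt hlt, weight, one_mul]

lemma sum_weight_insertions {m v : α} {F : PlaneForest α} (hv : v < m)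
    (hm : ∀ x ∈ F.labels, x < m) (hF : F.labels.Nodup) :
    ((F.insertions m).map (weight y t z v)).sum =
      (z v + (F.labels.map z).sum + F.labels.card * (y + t) + F.innerImproper * (y + t)) *
        F.weight y t z v := by
  induction F generalizing v with
  | nil =>
    simp [insertions, weight, labels, innerImproper, vertexWeight, hv.not_gt]
  | cons a c s ihc ihs =>
    obtain ⟨-, hc, hs, -⟩ := nodup_labels_cons.1 hF
    have ham : a < m := hm a (mem_labels_cons.2 (Or.inl rfl))
    have hbm : beta a c < m := (beta_le a c).trans_lt (WithTop.coe_lt_coe.2 ham)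
    set ω := vertexWeight y t z v (beta a c) s.minLabel with hω
    have inChildren : ∀ c' ∈ c.insertions m, (cons a c' s).weight y t z v =
        ω * s.weight y t z v * c'.weight y t z a := fun c' hc' => by
      rw [weight, beta_of_mem_insertions ham hc']
      ring
    have inSiblings : ∀ s' ∈ s.insertions m, (cons a c s').weight y t z v =
        ω * c.weight y t z a * s'.weight y t z v := fun s' hs' => by
      rw [weight, minLabel_of_labels_eq_cons (labels_of_mem_insertions hs'),
        vertexWeight_coe_inf hbm, mul_assoc]
    have inPlace : ∀ w ∈ expansions a c, (cons m w s).weight y t z v =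
        ω * s.weight y t z v * w.weight y t z m := fun w hw => by
      rw [weight, beta_of_mem_expansions ham hw]
      ring
    simp only [insertions, Multiset.map_cons, Multiset.map_add, Multiset.map_map,
      Function.comp_def, Multiset.sum_cons, Multiset.sum_add]
    rw [weight_leaf_cons ham, Multiset.map_congr rfl inChildren, Multiset.map_congr rfl inSiblings,
      Multiset.map_congr rfl inPlace]
    simp only [Multiset.sum_map_mul_left]
    rw [ihc ham (fun x hx => hm x (mem_labels_cons.2 (by tauto))) hc,
      ihs hv (fun x hx => hm x (mem_labels_cons.2 (by tauto))) hs, sum_weight_expansions ham hc]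
    simp only [weight, ← hω, labels, innerImproper, Multiset.map_cons, Multiset.map_add,
      Multiset.sum_cons, Multiset.sum_add, Multiset.card_cons, Multiset.card_add]
    push_cast
    ring

lemma derivation_vertexWeight {A : Type*} [CommSemiring A] [Algebra A R] (D : Derivation A R R)
    (hy : D y = y) (ht : D t = 0) (hz : ∀ a, D (z a) = 0) (v : α) (b r : WithTop α) :
    D (vertexWeight y t z v b r) =
      (if IsImproper v b r then 1 else 0) * vertexWeight y t z v b r := by
  rcases lt_or_ge r b with h | h
  · simp [vertexWeight, h, IsImproper, h.not_ge, ht]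
  · by_cases hb : b < v <;> simp [vertexWeight, IsImproper, h.not_gt, h, hb, hy, hz]

lemma derivation_weight {A : Type*} [CommSemiring A] [Algebra A R] (D : Derivation A R R)
    (hy : D y = y) (ht : D t = 0) (hz : ∀ a, D (z a) = 0) (v : α) (F : PlaneForest α) :
    D (F.weight y t z v) = (F.rootImproper v + F.innerImproper) * F.weight y t z v := by
  induction F generalizing v with
  | nil => simp [weight, rootImproper, innerImproper]
  | cons a c s ihc ihs =>
    simp only [weight, Derivation.leibniz, smul_eq_mul, ihc, ihs,
      derivation_vertexWeight D hy ht hz, rootImproper, innerImproper]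
    push_cast
    ring

end Weight

/-- The inverse of expansion: the vertex `a` and its children `c` such that `cons p d w` is one of
`expansions a c`. -/
def contract (p : α) (d : PlaneForest α) : PlaneForest α → α × PlaneForest α
  | nil => (p, d)
  | cons q e nil => if beta q e < beta p d then (p, cons q e d) else (q, cons p d e)
  | cons q e (cons b f g) =>
    ((contract q e (cons b f g)).1, cons p d (contract q e (cons b f g)).2)

lemma exists_eq_cons_cons_of_mem_splits {a : α} {c w : PlaneForest α} (h : w ∈ c.splits a) :
    ∃ p d q e f, w = cons p d (cons q e f) := by
  induction c generalizing w with
  | nil => simp [splits] at h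
  | cons p d s _ ih =>
    simp only [splits, Multiset.mem_add, Multiset.mem_map] at h
    rcases h with h | ⟨w, hw, rfl⟩
    · split_ifs at h
      · simp only [Multiset.insert_eq_cons, Multiset.mem_cons, Multiset.mem_singleton] at h
        grind
      · simp at h
    · obtain ⟨q, e, b, f, g, rfl⟩ := ih hw
      exact ⟨p, d, q, e, _, rfl⟩

lemma contract_of_mem_expansions {a p : α} {c d w : PlaneForest α} (hc : c.labels.Nodup)
    (h : cons p d w ∈ expansions a c) : contract p d w = (a, c) := by
  induction c generalizing p d w with
  | nil => simp_all [expansions, splits, contract]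
  | cons q e s _ ih =>
    simp only [expansions, splits, Multiset.mem_cons, Multiset.mem_add, Multiset.mem_map] at h
    rcases h with h | h | ⟨w, hws, h⟩
    · simp_all [contract]
    · split_ifs at h with himp
      · have hlt : beta q e < beta a s :=
          lt_inf_iff.2 ⟨himp.2, lt_of_le_of_ne himp.1 (beta_ne_minLabel hc)⟩
        simp only [Multiset.insert_eq_cons, Multiset.mem_cons, Multiset.mem_singleton] at h
        rcases h with h | h <;> cases h <;> simp [contract, hlt, hlt.not_gt]
      · simp at h
    · cases h
      obtain ⟨b, f, b', f', g, rfl⟩ := exists_eq_cons_cons_of_mem_splits hws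
      rw [contract, ih (nodup_labels_cons.1 hc).2.2.1 (Multiset.mem_cons_of_mem hws)]

lemma mem_expansions_contract {p : α} {d w : PlaneForest α} (hw : (cons p d w).labels.Nodup) :
    cons p d w ∈ expansions (contract p d w).1 (contract p d w).2 := by
  induction p, d, w using contract.induct with
  | case1 p d => exact Multiset.mem_cons_self _ _
  | case2 p d q e h =>
    have himp : IsImproper p (beta q e) d.minLabel := ⟨(lt_inf_iff.1 h).2.le, (lt_inf_iff.1 h).1⟩
    rw [contract, if_pos h, expansions, splits, if_pos himp]
    simp
  | case3 p d q e h =>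
    have hne : beta p d ≠ beta q e := by simpa using beta_ne_minLabel hw
    have hlt := lt_inf_iff.1 (lt_of_le_of_ne (not_lt.1 h) hne)
    have himp : IsImproper q (beta p d) e.minLabel := ⟨hlt.2.le, hlt.1⟩
    rw [contract, if_neg h, expansions, splits, if_pos himp]
    simp
  | case4 p d q e b f g ih =>
    have := ih (nodup_labels_cons.1 hw).2.2.1
    simp only [expansions, Multiset.mem_cons, cons.injEq, reduceCtorEq, and_false,
      false_or] at this
    simp only [contract, expansions, splits, Multiset.mem_cons, Multiset.mem_add,
      Multiset.mem_map]
    exact Or.inr (Or.inr ⟨_, this, rfl⟩)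

lemma nodup_splits {a : α} {c : PlaneForest α} (ha : a ∉ c.labels) : (c.splits a).Nodup := by
  induction c with
  | nil => exact Multiset.nodup_zero
  | cons p d s _ ih =>
    simp only [mem_labels_cons, not_or] at ha
    have hinj : Function.Injective (cons p d) := fun _ _ h => (cons.inj h).2.2
    refine (Multiset.nodup_add.2 ⟨?_, (ih ha.2.2).map hinj, Multiset.disjoint_left.2 ?_⟩)
    · split_ifs <;> simp [Ne.symm ha.1]
    · intro G hG hG'
      obtain ⟨w, hw, rfl⟩ := Multiset.mem_map.1 hG'
      obtain ⟨b, f, b', f', g, rfl⟩ := exists_eq_cons_cons_of_mem_splits hw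
      split_ifs at hG <;> simp_all

lemma nodup_expansions {a : α} {c : PlaneForest α} (ha : a ∉ c.labels) :
    (expansions a c).Nodup := by
  refine Multiset.nodup_cons.2 ⟨fun h => ?_, nodup_splits ha⟩
  obtain ⟨b, f, b', f', g, h⟩ := exists_eq_cons_cons_of_mem_splits h
  simp at h

lemma nodup_insertions {m : α} {F : PlaneForest α} (hm : m ∉ F.labels) (hF : F.labels.Nodup) :
    (F.insertions m).Nodup := by
  induction F with
  | nil => exact Multiset.nodup_singleton _
  | cons a c s ihc ihs =>
    obtain ⟨⟨ha, -⟩, hc, hs, -⟩ := nodup_labels_cons.1 hF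
    simp only [mem_labels_cons, not_or] at hm
    have hself : c ∉ c.insertions m := fun h => hm.2.1 <| by
      rw [labels_of_mem_insertions h]; exact Multiset.mem_cons_self _ _
    have hnil : nil ∉ expansions a c := fun h => by
      simpa [labels] using labels_of_mem_expansions h
    simp only [insertions, Multiset.nodup_cons, Multiset.nodup_add, Multiset.mem_add,
      Multiset.mem_map, Multiset.disjoint_left]
    refine ⟨?_, ⟨(ihc hm.2.1 hc).map fun _ _ h => (cons.inj h).2.1,
      (ihs hm.2.2 hs).map fun _ _ h => (cons.inj h).2.2, ?_⟩,
      (nodup_expansions ha).map fun _ _ h => (cons.inj h).2.1, ?_⟩ <;> grind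

/-- The forest left when the root of the leftmost tree of `cons m w s` is removed: nothing takes
its place if it is a leaf, and the contraction of its children `w` does otherwise. -/
def fill : PlaneForest α → PlaneForest α → PlaneForest α
  | nil, s => s
  | cons p d w, s => cons (contract p d w).1 (contract p d w).2 s

/-- The forest obtained by removing the largest label `m`; inverse to insertion. -/
def remove (m : α) : PlaneForest α → PlaneForest α
  | nil => nil
  | cons b c s =>
    if b = m then fill c s
    else if m ∈ c.labels then cons b (c.remove m) s else cons b c (s.remove m)

lemma fill_of_mem_expansions {a : α} {c w s : PlaneForest α} (hc : c.labels.Nodup)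
    (h : w ∈ expansions a c) : fill w s = cons a c s := by
  cases w with
  | nil => simpa [labels] using labels_of_mem_expansions h
  | cons p d w => rw [fill, contract_of_mem_expansions hc h]

lemma mem_insertions_fill {m : α} {w s : PlaneForest α} (hw : w.labels.Nodup) :
    cons m w s ∈ (fill w s).insertions m := by
  cases w with
  | nil => cases s <;> simp [fill, insertions]
  | cons p d w =>
    simp only [fill, insertions, Multiset.mem_cons, Multiset.mem_add, Multiset.mem_map]
    exact Or.inr (Or.inr ⟨_, mem_expansions_contract hw, rfl⟩)

lemma remove_of_mem_insertions {m : α} {F G : PlaneForest α} (hm : m ∉ F.labels)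
    (hF : F.labels.Nodup) (h : G ∈ F.insertions m) : G.remove m = F := by
  induction F generalizing G with
  | nil => simp_all [insertions, remove, fill]
  | cons a c s ihc ihs =>
    obtain ⟨-, hc, hs, -⟩ := nodup_labels_cons.1 hF
    simp only [mem_labels_cons, not_or] at hm
    simp only [insertions, Multiset.mem_add, Multiset.mem_map, Multiset.mem_cons] at h
    rcases h with rfl | (⟨c', h, rfl⟩ | ⟨s', h, rfl⟩) | ⟨w, h, rfl⟩
    · simp [remove, fill]
    · have : m ∈ c'.labels := by
        rw [labels_of_mem_insertions h]; exact Multiset.mem_cons_self _ _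
      rw [remove, if_neg (Ne.symm hm.1), if_pos this, ihc hm.2.1 hc h]
    · rw [remove, if_neg (Ne.symm hm.1), if_neg hm.2.1, ihs hm.2.2 hs h]
    · rw [remove, if_pos rfl, fill_of_mem_expansions hc h]

lemma mem_insertions_remove {m : α} {G : PlaneForest α} (hm : m ∈ G.labels)
    (hG : G.labels.Nodup) : G ∈ (G.remove m).insertions m := by
  induction G with
  | nil => simp [labels] at hm
  | cons b c s ihc ihs =>
    obtain ⟨-, hc, hs, -⟩ := nodup_labels_cons.1 hG
    rw [remove]
    split_ifs with hb hmc
    · exact hb ▸ mem_insertions_fill hc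
    · simp only [insertions, Multiset.mem_cons, Multiset.mem_add, Multiset.mem_map]
      exact Or.inr (Or.inl (Or.inl ⟨_, ihc hmc hc, rfl⟩))
    · have hms : m ∈ s.labels := by
        rcases mem_labels_cons.1 hm with h | h | h
        exacts [absurd h.symm hb, absurd h hmc, h]
      simp only [insertions, Multiset.mem_cons, Multiset.mem_add, Multiset.mem_map]
      exact Or.inr (Or.inl (Or.inr ⟨_, ihs hms hs, rfl⟩))

lemma exists_mem_insertions {m : α} {s : Finset α} (hm : m ∉ s) {G : PlaneForest α}
    (hG : G.labels = (insert m s).val) :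
    ∃ F : PlaneForest α, F.labels = s.val ∧ G ∈ F.insertions m := by
  have hGm : G ∈ (G.remove m).insertions m :=
    mem_insertions_remove (by simp [hG]) (hG ▸ Finset.nodup _)
  refine ⟨G.remove m, ?_, hGm⟩
  rw [← Multiset.cons_inj_right m, ← labels_of_mem_insertions hGm, hG,
    Finset.insert_val_of_notMem hm]

lemma finite_setOf_labels_eq (s : Finset α) : {F : PlaneForest α | F.labels = s.val}.Finite := by
  induction s using Finset.induction with
  | empty =>
    refine (Set.finite_singleton nil).subset fun F hF => ?_
    exact labels_eq_zero.1 hF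
  | insert m s hm ih =>
    refine (ih.biUnion fun F _ => Multiset.finite_toSet (F.insertions m)).subset fun G hG => ?_
    obtain ⟨F, hF, hGF⟩ := exists_mem_insertions hm hG
    exact Set.mem_biUnion (x := F) hF hGF

/-- The finitely many plane forests whose labels are the elements of `s`, each used once. -/
def forestsOn (s : Finset α) : Finset (PlaneForest α) := (finite_setOf_labels_eq s).toFinset

lemma mem_forestsOn {s : Finset α} {F : PlaneForest α} : F ∈ forestsOn s ↔ F.labels = s.val := by
  simp [forestsOn]

lemma forestsOn_insert_val {m : α} {s : Finset α} (hm : m ∉ s) :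
    (forestsOn (insert m s)).val = (forestsOn s).val.bind (insertions m) := by
  have hlabels : ∀ F ∈ forestsOn s, m ∉ F.labels ∧ F.labels.Nodup := fun F hF => by
    rw [mem_forestsOn.1 hF]; exact ⟨hm, s.nodup⟩
  refine (Multiset.Nodup.ext (Finset.nodup _) ?_).2 fun G => ?_
  · refine Multiset.nodup_bind.2
      ⟨fun F hF => nodup_insertions (hlabels F hF).1 (hlabels F hF).2, ?_⟩
    refine Multiset.Nodup.pairwise (fun F hF F' hF' hne => ?_) (forestsOn s).nodup
    refine Multiset.disjoint_left.2 fun {G} hG hG' => hne ?_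
    rw [← remove_of_mem_insertions (hlabels F hF).1 (hlabels F hF).2 hG,
      remove_of_mem_insertions (hlabels F' hF').1 (hlabels F' hF').2 hG']
  · rw [Finset.mem_val, mem_forestsOn, Multiset.mem_bind]
    constructor
    · intro hG
      obtain ⟨F, hF, hGF⟩ := exists_mem_insertions hm hG
      exact ⟨F, mem_forestsOn.2 hF, hGF⟩
    · rintro ⟨F, hF, hG⟩
      rw [labels_of_mem_insertions hG, mem_forestsOn.1 hF, Finset.insert_val_of_notMem hm]

lemma sum_forestsOn_insert {M : Type*} [AddCommMonoid M] {m : α} {s : Finset α} (hm : m ∉ s)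
    (f : PlaneForest α → M) :
    ∑ F ∈ forestsOn (insert m s), f F = ∑ F ∈ forestsOn s, ((F.insertions m).map f).sum := by
  simp only [Finset.sum, forestsOn_insert_val hm, Multiset.map_bind, Multiset.sum_bind]

lemma sum_weight_forestsOn_insert {R A : Type*} [CommSemiring R] [CommSemiring A] [Algebra A R]
    {y t : R} {z : α → R} (D : Derivation A R R) (hy : D y = y) (ht : D t = 0)
    (hz : ∀ a, D (z a) = 0) {m v : α} {s : Finset α} (hvs : ∀ x ∈ s, v < x) (hvm : v < m)
    (hsm : ∀ x ∈ s, x < m) :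
    ∑ F ∈ forestsOn (insert m s), F.weight y t z v =
      (z v + ∑ a ∈ s, z a + s.card * (y + t)) * ∑ F ∈ forestsOn s, F.weight y t z v +
        (y + t) * D (∑ F ∈ forestsOn s, F.weight y t z v) := by
  rw [sum_forestsOn_insert fun hm => (hsm m hm).false, map_sum, Finset.mul_sum, Finset.mul_sum,
    ← Finset.sum_add_distrib]
  refine Finset.sum_congr rfl fun F hF => ?_
  have hF' : F.labels = s.val := mem_forestsOn.1 hF
  rw [sum_weight_insertions hvm (hF' ▸ hsm) (hF' ▸ s.nodup), derivation_weight D hy ht hz,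
    rootImproper_eq_zero (hF' ▸ hvs), hF', Finset.card_val, Nat.cast_zero, zero_add]
  simp only [Finset.sum]
  ring

lemma forestsOn_empty : forestsOn (∅ : Finset α) = {nil} := by
  ext F
  rw [mem_forestsOn, Finset.empty_val, labels_eq_zero, Finset.mem_singleton]

/-- The weight of a forest of children of `v`, with `y`, `t` and `z` the corresponding variables of
`Qpoly`, except that the younger children of `v` reached by a proper edge have weight `x`. -/
def polyWeight (v : α) : PlaneForest α → MvPolynomial (Fin 4) ℚ :=
  weight (X 1) (X 3) (fun a => if a = v then X 0 else X 2) v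

lemma sum_polyWeight_forestsOn {v : α} {s : Finset α} (hs : s.Nonempty) (hv : ∀ x ∈ s, v < x) :
    ∑ F ∈ forestsOn s, F.polyWeight v = X 0 * Qpoly s.card := by
  induction s using Finset.induction_on_max with
  | empty => exact absurd hs Finset.not_nonempty_empty
  | insert m s hsm ih =>
    have hvs : ∀ x ∈ s, v < x := fun x hx => hv x (Finset.mem_insert_of_mem hx)
    have hz : ∑ a ∈ s, (if a = v then X 0 else X 2 : MvPolynomial (Fin 4) ℚ) =
        C (s.card : ℚ) * X 2 := by
      rw [Finset.sum_congr rfl fun a ha => if_neg (hvs a ha).ne', Finset.sum_const, nsmul_eq_mul,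
        map_natCast]
    let D : Derivation ℚ (MvPolynomial (Fin 4) ℚ) (MvPolynomial (Fin 4) ℚ) :=
      (X 1 : MvPolynomial (Fin 4) ℚ) • pderiv 1
    have hDX : ∀ i, i ≠ 1 → D (X i) = 0 := fun i hi => by simp [D, pderiv_X_of_ne hi]
    have hD : ∀ q, D (X 0 * q) = X 0 * (X 1 * pderiv 1 q) := fun q => by
      rw [Derivation.leibniz, hDX 0 (by decide), smul_zero, add_zero]
      rfl
    simp only [polyWeight] at ih ⊢
    rw [sum_weight_forestsOn_insert D (by simp [D]) (hDX 3 (by decide))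
      (fun a => by split_ifs <;> exact hDX _ (by decide)) hvs
      (hv m (Finset.mem_insert_self m s)) hsm, hz, if_pos rfl,
      Finset.card_insert_of_notMem fun hm => (hsm m hm).false]
    rcases s.eq_empty_or_nonempty with rfl | hs
    · simp [forestsOn_empty, weight, Qpoly]
    · obtain ⟨k, hk⟩ := Nat.exists_eq_succ_of_ne_zero hs.card_pos.ne'
      rw [ih hs hvs, hD, hk, Qpoly, Nat.cast_succ, Nat.cast_succ, ← map_natCast C, map_add, map_one]
      ring

end Insertion

end LinearOrder

/-! ### Encoding by parent and rank functions -/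

section Encoding

variable {α : Type*} {p p' : α → α} {r r' : α → ℕ} {v : α} {i : ℕ} {F : PlaneForest α}

/-- The forest `F`, placed below `v` with ranks starting at `i`, is encoded by the parent function
`p` and the rank function `r`; nothing is required outside its labels. -/
def EncodedBy (p : α → α) (r : α → ℕ) (v : α) (i : ℕ) : PlaneForest α → Prop
  | nil => True
  | cons a c s => (p a = v ∧ r a = i) ∧ c.EncodedBy p r a 0 ∧ s.EncodedBy p r v (i + 1)

lemma EncodedBy.congr (h : F.EncodedBy p r v i) (hp : ∀ x ∈ F.labels, p' x = p x ∧ r' x = r x) :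
    F.EncodedBy p' r' v i := by
  induction F generalizing v i with
  | nil => trivial
  | cons a c s ihc ihs =>
    simp only [mem_labels_cons] at hp
    exact ⟨by rw [(hp a (by tauto)).1, (hp a (by tauto)).2]; exact h.1,
      ihc h.2.1 fun x hx => hp x (by tauto), ihs h.2.2 fun x hx => hp x (by tauto)⟩

lemma EncodedBy.parent_eq_and_rank_eq (h : F.EncodedBy p r v i)
    (h' : F.EncodedBy p' r' v i) {x : α} (hx : x ∈ F.labels) : p x = p' x ∧ r x = r' x := by
  induction F generalizing v i with
  | nil => simp [labels] at hx
  | cons a c s ihc ihs =>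
    rcases mem_labels_cons.1 hx with rfl | hx | hx
    · exact ⟨h.1.1.trans h'.1.1.symm, h.1.2.trans h'.1.2.symm⟩
    · exact ihc h.2.1 h'.2.1 hx
    · exact ihs h.2.2 h'.2.2 hx

lemma exists_encodedBy (hF : F.labels.Nodup) (v : α) (i : ℕ) :
    ∃ p r, F.EncodedBy p r v i ∧ ∀ x ∉ F.labels, p x = v ∧ r x = 0 := by
  classical
  induction F generalizing v i with
  | nil => exact ⟨fun _ => v, fun _ => 0, trivial, fun _ _ => ⟨rfl, rfl⟩⟩
  | cons a c s ihc ihs =>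
    obtain ⟨⟨hac, has⟩, hc, hs, hcs⟩ := nodup_labels_cons.1 hF
    obtain ⟨pc, rc, hpc, -⟩ := ihc hc a 0
    obtain ⟨ps, rs, hps, hout⟩ := ihs hs v (i + 1)
    refine ⟨fun x => if x = a then v else if x ∈ c.labels then pc x else ps x,
      fun x => if x = a then i else if x ∈ c.labels then rc x else rs x,
      ⟨⟨if_pos rfl, if_pos rfl⟩, hpc.congr fun x hx => ?_, hps.congr fun x hx => ?_⟩,
      fun x hx => ?_⟩
    · have hxa : x ≠ a := fun h => hac (h ▸ hx)
      simp [hxa, hx]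
    · have hxa : x ≠ a := fun h => has (h ▸ hx)
      have hxc : x ∉ c.labels := fun h => Multiset.disjoint_left.1 hcs h hx
      simp [hxa, hxc]
    · simp only [mem_labels_cons, not_or] at hx
      simp [hx, hout x hx.2.2]

lemma EncodedBy.exists_iterate_eq (h : F.EncodedBy p r v i) {x : α} (hx : x ∈ F.labels) :
    ∃ k ≤ F.labels.card, p^[k] x = v := by
  induction F generalizing v i with
  | nil => simp [labels] at hx
  | cons a c s ihc ihs =>
    simp only [labels, Multiset.card_cons, Multiset.card_add]
    rcases mem_labels_cons.1 hx with rfl | hx | hx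
    · exact ⟨1, by omega, h.1.1⟩
    · obtain ⟨k, hk, hka⟩ := ihc h.2.1 hx
      exact ⟨k + 1, by omega, by rw [iterate_succ_apply', hka, h.1.1]⟩
    · obtain ⟨k, hk, hkv⟩ := ihs h.2.2 hx
      exact ⟨k, by omega, hkv⟩

lemma EncodedBy.rank_lt (h : F.EncodedBy p r v i) {x : α} (hx : x ∈ F.labels) :
    r x < i + F.labels.card := by
  induction F generalizing v i with
  | nil => simp [labels] at hx
  | cons a c s ihc ihs =>
    simp only [labels, Multiset.card_cons, Multiset.card_add]
    rcases mem_labels_cons.1 hx with rfl | hx | hx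
    · have := h.1.2
      omega
    · have := ihc h.2.1 hx
      omega
    · have := ihs h.2.2 hx
      omega

lemma EncodedBy.parent_eq_or_mem (h : F.EncodedBy p r v i) {x : α} (hx : x ∈ F.labels) :
    (p x = v ∧ i ≤ r x) ∨ p x ∈ F.labels := by
  induction F generalizing v i with
  | nil => simp [labels] at hx
  | cons a c s ihc ihs =>
    rw [mem_labels_cons] at hx ⊢
    rcases hx with rfl | hx | hx
    · exact Or.inl ⟨h.1.1, h.1.2.ge⟩
    · have := ihc h.2.1 hx
      tauto
    · have := ihs h.2.2 hx
      grind

lemma EncodedBy.eq_of_parent_eq_of_rank_eq (h : F.EncodedBy p r v i) (hF : F.labels.Nodup)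
    (hv : v ∉ F.labels) {x y : α} (hx : x ∈ F.labels) (hy : y ∈ F.labels)
    (hp : p x = p y) (hr : r x = r y) : x = y := by
  induction F generalizing v i with
  | nil => simp [labels] at hx
  | cons a c s ihc ihs =>
    obtain ⟨⟨hac, has⟩, hc, hs, hcs⟩ := nodup_labels_cons.1 hF
    obtain ⟨⟨hpa, hra⟩, h₁, h₂⟩ := h
    simp only [mem_labels_cons, not_or] at hx hy hv
    have hpc : ∀ z ∈ c.labels, p z ≠ v ∧ p z ∉ s.labels := fun z hz => by
      rcases h₁.parent_eq_or_mem hz with h | h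
      · exact h.1 ▸ ⟨Ne.symm hv.1, has⟩
      · exact ⟨fun hzv => hv.2.1 (hzv ▸ h), Multiset.disjoint_left.1 hcs h⟩
    have hcs' : ∀ z ∈ c.labels, ∀ w ∈ s.labels, p z ≠ p w := fun z hz w hw hzw => by
      rcases h₂.parent_eq_or_mem hw with h | h
      · exact (hpc z hz).1 (hzw.trans h.1)
      · exact (hpc z hz).2 (hzw ▸ h)
    have hsv : ∀ w ∈ s.labels, p w = v → i < r w := fun w hw hwv =>
      (h₂.parent_eq_or_mem hw).elim (fun h => h.2) fun h => absurd (hwv ▸ h) hv.2.2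
    rcases hx with rfl | hx | hx <;> rcases hy with rfl | hy | hy
    · rfl
    · exact absurd (hp.symm.trans hpa) (hpc y hy).1
    · exact absurd (hr.symm.trans hra) (hsv y hy (hp.symm.trans hpa)).ne'
    · exact absurd (hp.trans hpa) (hpc x hx).1
    · exact ihc h₁ hc hac hx hy
    · exact absurd hp (hcs' x hx y hy)
    · exact absurd (hr.trans hra) (hsv x hx (hp.trans hpa)).ne'
    · exact absurd hp.symm (hcs' y hy x hx)
    · exact ihs h₂ hs hv.2.2 hx hy

lemma EncodedBy.exists_rank_eq (h : F.EncodedBy p r v i) {x : α} (hx : x ∈ F.labels) {j : ℕ}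
    (hj : j < r x) (hij : p x = v → i ≤ j) : ∃ y ∈ F.labels, p y = p x ∧ r y = j := by
  induction F generalizing v i with
  | nil => simp [labels] at hx
  | cons a c s ihc ihs =>
    obtain ⟨⟨hpa, hra⟩, hc, hs⟩ := h
    simp only [mem_labels_cons] at hx ⊢
    rcases hx with rfl | hx | hx
    · exact absurd (hij hpa) (hra ▸ hj).not_ge
    · obtain ⟨y, hy, hyx⟩ := ihc hc hx fun _ => j.zero_le
      exact ⟨y, by tauto, hyx⟩
    · by_cases hxi : p x = v ∧ i = j
      · exact ⟨a, Or.inl rfl, hpa.trans hxi.1.symm, hra.trans hxi.2⟩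
      · obtain ⟨y, hy, hyx⟩ := ihs hs hx fun hxv => (hij hxv).lt_of_ne fun h => hxi ⟨hxv, h⟩
        exact ⟨y, by tauto, hyx⟩

end Encoding

end PlaneForest

namespace PlanarTree

/-! ### The forests below the vertices of a planar tree -/

section Forest

variable {n : ℕ} (T : PlanarTree n)

/-- `c` is a child of `v`; the root is its own `parent`, but not its own child. -/
def IsChild (c v : Fin n) : Prop := c.val ≠ 0 ∧ T.1.1 c = v

/-- `x` is a descendant of one of the children of `v` of rank at least `i`. -/
def Under (v : Fin n) (i : ℕ) (x : Fin n) : Prop :=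
  ∃ c, T.IsChild c v ∧ i ≤ (T.1.2 c).val ∧ ∃ k, T.1.1^[k] x = c

variable {T}

lemma iterate_parent_ne_self {c : Fin n} (hc : c.val ≠ 0) (k : ℕ) : T.1.1^[k + 1] c ≠ c := by
  intro h
  obtain ⟨l, -, hl⟩ := T.2.2.1 c
  have hroot := Function.iterate_fixed (T.2.1 _ hl)
  have hle : l ≤ (k + 1) * l := Nat.le_mul_of_pos_left l k.succ_pos
  have hcycle : T.1.1^[(k + 1) * l] c = c := by
    rw [Function.iterate_mul]
    exact Function.iterate_fixed h l
  rw [← Nat.sub_add_cancel hle, Function.iterate_add_apply, hroot] at hcycle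
  exact hc (hcycle ▸ hl)

lemma IsChild.eq_of_iterate_parent {c d v x : Fin n} {k l : ℕ} (hc : T.IsChild c v)
    (hd : T.IsChild d v) (hk : T.1.1^[k] x = c) (hl : T.1.1^[l] x = d) : c = d := by
  wlog hkl : k ≤ l generalizing c d k l
  · exact (this hd hc hl hk (le_of_not_ge hkl)).symm
  obtain ⟨j, rfl⟩ := Nat.exists_eq_add_of_le' hkl
  rw [Function.iterate_add_apply, hk] at hl
  cases j with
  | zero => exact hl
  | succ j =>
    refine absurd ?_ (iterate_parent_ne_self (T := T) hd.1 j)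
    rw [Function.iterate_succ_apply, hd.2, ← hc.2, ← Function.iterate_succ_apply, hl]

lemma not_under_self (v : Fin n) (i : ℕ) : ¬T.Under v i v := by
  rintro ⟨c, hc, -, k, hk⟩
  refine iterate_parent_ne_self (T := T) hc.1 k ?_
  rw [Function.iterate_succ_apply, hc.2, hk]

lemma eq_or_under_of_iterate_parent {c x : Fin n} {k : ℕ} (h : T.1.1^[k] x = c) :
    x = c ∨ T.Under c 0 x := by
  induction k with
  | zero => exact Or.inl h
  | succ k ih =>
    rw [Function.iterate_succ_apply'] at h
    by_cases hd : (T.1.1^[k] x).val = 0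
    · exact ih ((T.2.1 _ hd).symm.trans h)
    · exact Or.inr ⟨_, ⟨hd, h⟩, Nat.zero_le _, k, rfl⟩

lemma Under.exists_iterate_parent_eq {v x : Fin n} {i : ℕ} (h : T.Under v i x) :
    ∃ k, T.1.1^[k] x = v := by
  obtain ⟨c, hc, -, k, hk⟩ := h
  exact ⟨k + 1, by rw [Function.iterate_succ_apply', hk, hc.2]⟩

lemma not_under_of_forall {v x : Fin n} {i : ℕ}
    (h : ∀ c, T.IsChild c v → (T.1.2 c).val ≠ i) : ¬T.Under v i x := by
  rintro ⟨c, hc, hi, -⟩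
  obtain hi | hi := hi.eq_or_lt
  · exact h c hc hi.symm
  · obtain ⟨d, hd, hdc, hrank⟩ := T.2.2.2.2.2 c hc.1 ⟨i, hi.trans (T.1.2 c).isLt⟩ hi
    exact h d ⟨hd, hdc.trans hc.2⟩ (congrArg Fin.val hrank)

lemma IsChild.eq_of_rank_eq {c d v : Fin n} (hc : T.IsChild c v) (hd : T.IsChild d v)
    (h : T.1.2 c = T.1.2 d) : c = d :=
  T.2.2.2.2.1 c d hc.1 hd.1 (hc.2.trans hd.2.symm) h

lemma IsChild.under_iff {c v x : Fin n} {i : ℕ} (hc : T.IsChild c v) (hi : T.1.2 c = i) :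
    T.Under v i x ↔ x = c ∨ T.Under c 0 x ∨ T.Under v (i + 1) x := by
  constructor
  · rintro ⟨d, hd, hid, k, hk⟩
    obtain hid | hid := hid.eq_or_lt
    · obtain rfl := hc.eq_of_rank_eq hd (Fin.ext (hi.trans hid))
      exact or_assoc.1 (Or.inl (eq_or_under_of_iterate_parent hk))
    · exact Or.inr (Or.inr ⟨d, hd, hid, k, hk⟩)
  · rintro (rfl | h | ⟨d, hd, hid, hx⟩)
    · exact ⟨x, hc, hi.ge, 0, rfl⟩
    · exact ⟨c, hc, hi.ge, h.exists_iterate_parent_eq⟩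
    · exact ⟨d, hd, (Nat.le_succ _).trans hid, hx⟩

lemma IsChild.not_under_add_one {c v x : Fin n} {i k : ℕ} (hc : T.IsChild c v)
    (hi : T.1.2 c = i) (hk : T.1.1^[k] x = c) : ¬T.Under v (i + 1) x := by
  rintro ⟨d, hd, hid, l, hl⟩
  obtain rfl := hc.eq_of_iterate_parent hd hk hl
  exact hi.not_gt hid

variable (T) in
open Classical in
/-- The forest of the subtrees of `T` at the children of `v` of rank at least `i`. -/
def forest (v : Fin n) (i : ℕ) : PlaneForest (Fin n) :=
  if h : ∃ c, T.IsChild c v ∧ T.1.2 c = i then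
    .cons h.choose (forest h.choose 0) (forest v (i + 1))
  else .nil
termination_by {x | T.Under v i x}.ncard
decreasing_by
  all_goals
    obtain ⟨hc, hi⟩ := h.choose_spec
    refine Set.ncard_lt_ncard ((Set.ssubset_iff_of_subset fun x hx => ?_).2
      ⟨h.choose, (hc.under_iff hi).2 (Or.inl rfl), ?_⟩) (Set.toFinite _)
  · exact (hc.under_iff hi).2 (Or.inr (Or.inl hx))
  · exact not_under_self _ _
  · exact (hc.under_iff hi).2 (Or.inr (Or.inr hx))
  · exact hc.not_under_add_one hi (k := 0) rfl

lemma IsChild.forest_eq {c v : Fin n} {i : ℕ} (hc : T.IsChild c v) (hi : T.1.2 c = i) :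
    T.forest v i = .cons c (T.forest c 0) (T.forest v (i + 1)) := by
  have h : ∃ d, T.IsChild d v ∧ T.1.2 d = i := ⟨c, hc, hi⟩
  have hchoose : h.choose = c :=
    h.choose_spec.1.eq_of_rank_eq hc (Fin.ext (h.choose_spec.2.trans hi.symm))
  rw [forest, dif_pos h, hchoose]

lemma forest_eq_nil {v : Fin n} {i : ℕ} (h : ∀ c, T.IsChild c v → T.1.2 c ≠ i) :
    T.forest v i = .nil := by
  rw [forest, dif_neg (by grind)]

lemma forest_induction {motive : Fin n → ℕ → Prop}
    (nil : ∀ v i, (∀ c, T.IsChild c v → (T.1.2 c).val ≠ i) → motive v i)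
    (cons : ∀ v i c, T.IsChild c v → (T.1.2 c).val = i →
      motive c 0 → motive v (i + 1) → motive v i)
    (v : Fin n) (i : ℕ) : motive v i := by
  induction v, i using forest.induct T with
  | case1 v i h ih₁ ih₂ => exact cons v i _ h.choose_spec.1 h.choose_spec.2 ih₁ ih₂
  | case2 v i h => exact nil v i (by grind)

lemma mem_labels_forest {v x : Fin n} {i : ℕ} : x ∈ (T.forest v i).labels ↔ T.Under v i x := by
  induction v, i using forest_induction (T := T) with
  | nil v i h => simp [forest_eq_nil h, PlaneForest.labels, not_under_of_forall h]
  | cons v i c hc hi ihc ihs =>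
    rw [hc.forest_eq hi, PlaneForest.mem_labels_cons, ihc, ihs, hc.under_iff hi]

variable (T) in
lemma nodup_labels_forest (v : Fin n) (i : ℕ) : (T.forest v i).labels.Nodup := by
  induction v, i using forest_induction (T := T) with
  | nil v i h => simp [forest_eq_nil h, PlaneForest.labels]
  | cons v i c hc hi ihc ihs =>
    simp only [hc.forest_eq hi, PlaneForest.nodup_labels_cons, Multiset.disjoint_left,
      mem_labels_forest]
    refine ⟨⟨not_under_self _ _, hc.not_under_add_one hi (k := 0) rfl⟩, ihc, ihs, fun {x} hx => ?_⟩
    obtain ⟨k, hk⟩ := hx.exists_iterate_parent_eq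
    exact hc.not_under_add_one hi hk

lemma beta_le_of_iterate_parent {a x : Fin n} {k : ℕ} (h : T.1.1^[k] x = a) :
    T.beta a ≤ x.val :=
  Nat.sInf_le ⟨x, rfl, k, h⟩

variable (T) in
lemma exists_val_eq_beta (a : Fin n) : ∃ x : Fin n, x.val = T.beta a ∧ ∃ k, T.1.1^[k] x = a :=
  Nat.sInf_mem (s := {j | ∃ x : Fin n, x.val = j ∧ ∃ k, T.1.1^[k] x = a}) ⟨a, a, rfl, 0, rfl⟩

variable (T) in
lemma exists_beta_forest (a : Fin n) :
    ∃ b : Fin n, b.val = T.beta a ∧ PlaneForest.beta a (T.forest a 0) = b := by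
  obtain ⟨b, hb, k, hk⟩ := T.exists_val_eq_beta a
  obtain ⟨x, hx, hxb⟩ := PlaneForest.beta_eq_coe a (T.forest a 0)
  have hle : T.beta a ≤ x := by
    rcases hx with rfl | hx
    · exact beta_le_of_iterate_parent (k := 0) rfl
    · obtain ⟨l, hl⟩ := (mem_labels_forest.1 hx).exists_iterate_parent_eq
      exact beta_le_of_iterate_parent hl
  refine ⟨b, hb, le_antisymm ?_ (hxb ▸ WithTop.coe_le_coe.2 (Fin.le_def.2 (hb ▸ hle)))⟩
  rcases eq_or_under_of_iterate_parent hk with rfl | h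
  · exact PlaneForest.beta_le _ _
  · exact inf_le_right.trans (PlaneForest.le_minLabel_iff.1 le_rfl b (mem_labels_forest.2 h))

lemma IsChild.minLabel_lt_beta_iff {c v : Fin n} {i : ℕ} (hc : T.IsChild c v)
    (hi : T.1.2 c = i) :
    (T.forest v (i + 1)).minLabel < PlaneForest.beta c (T.forest c 0) ↔ T.Elder c := by
  obtain ⟨b, hb, hbc⟩ := T.exists_beta_forest c
  rw [hbc]
  constructor
  · intro h
    rcases (T.forest v (i + 1)).minLabel_eq_top_or_mem with htop | ⟨x, hx, hxm⟩
    · simp [htop] at h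
    · obtain ⟨d, hd, hid, k, hk⟩ := mem_labels_forest.1 hx
      refine ⟨hc.1, d, hd.1, hd.2.trans hc.2.symm, Fin.lt_def.2 (hi ▸ hid), ?_⟩
      rw [← hb]
      rw [hxm, WithTop.coe_lt_coe] at h
      exact (beta_le_of_iterate_parent hk).trans_lt h
  · rintro ⟨-, d, hd, hdc, hcd, hlt⟩
    obtain ⟨x, hx, hxd⟩ := T.exists_val_eq_beta d
    have hmem : x ∈ (T.forest v (i + 1)).labels :=
      mem_labels_forest.2 ⟨d, ⟨hd, hdc.trans hc.2⟩, hi ▸ hcd, hxd⟩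
    refine (PlaneForest.le_minLabel_iff.1 le_rfl x hmem).trans_lt (WithTop.coe_lt_coe.2 ?_)
    rwa [Fin.lt_def, hx, hb]

section Weight

variable {R : Type*} (y t : R) (z : Fin n → R)

variable (T) in
open Classical in
/-- The counterpart of `PlaneForest.vertexWeight`: the weight of the non-root vertex `c`. -/
def vertexWeight (c : Fin n) : R :=
  if T.Elder c then t else if T.beta c < (T.1.1 c).val then y else z (T.1.1 c)

lemma IsChild.vertexWeight_eq {c v : Fin n} {i : ℕ} (hc : T.IsChild c v) (hi : T.1.2 c = i) :
    PlaneForest.vertexWeight y t z v (PlaneForest.beta c (T.forest c 0))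
      (T.forest v (i + 1)).minLabel = T.vertexWeight y t z c := by
  have hlt : PlaneForest.beta c (T.forest c 0) < v ↔ T.beta c < v.val := by
    obtain ⟨b, hb, hbc⟩ := T.exists_beta_forest c
    rw [hbc, ← hb, WithTop.coe_lt_coe, Fin.lt_def]
  simp only [PlaneForest.vertexWeight, vertexWeight, hc.2, hlt]
  congr 1
  exact propext (hc.minLabel_lt_beta_iff hi)

lemma weight_forest [CommSemiring R] (v : Fin n) (i : ℕ) :
    (T.forest v i).weight y t z v = ((T.forest v i).labels.map (T.vertexWeight y t z)).prod := by
  induction v, i using forest_induction (T := T) with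
  | nil v i h => simp [forest_eq_nil h, PlaneForest.weight, PlaneForest.labels]
  | cons v i c hc hi ihc ihs =>
    simp only [hc.forest_eq hi, PlaneForest.weight, hc.vertexWeight_eq y t z hi,
      PlaneForest.labels, Multiset.map_cons, Multiset.map_add, Multiset.prod_cons,
      Multiset.prod_add, ihc, ihs]

end Weight

variable (T) in
lemma encodedBy_forest (v : Fin n) (i : ℕ) :
    (T.forest v i).EncodedBy T.1.1 (fun x => T.1.2 x) v i := by
  induction v, i using forest_induction (T := T) with
  | nil v i h => rw [forest_eq_nil h]; trivial
  | cons v i c hc hi ihc ihs => rw [hc.forest_eq hi]; exact ⟨⟨hc.2, hi⟩, ihc, ihs⟩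

lemma under_of_mem_labels {F : PlaneForest (Fin n)} {v x : Fin n}
    {i : ℕ} (h : F.EncodedBy T.1.1 (fun x => T.1.2 x) v i) (hF : ∀ x ∈ F.labels, x.val ≠ 0)
    (hx : x ∈ F.labels) : T.Under v i x := by
  induction F generalizing v i with
  | nil => simp [PlaneForest.labels] at hx
  | cons a c s ihc ihs =>
    simp only [PlaneForest.mem_labels_cons] at hF hx
    have ha : T.IsChild a v := ⟨hF a (Or.inl rfl), h.1.1⟩
    refine (ha.under_iff h.1.2).2 (hx.imp_right (Or.imp ?_ ?_))
    · exact ihc h.2.1 fun x hx => hF x (by tauto)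
    · exact ihs h.2.2 fun x hx => hF x (by tauto)

lemma forest_eq_of_encodedBy {F : PlaneForest (Fin n)} {v : Fin n}
    {i : ℕ} (h : F.EncodedBy T.1.1 (fun x => T.1.2 x) v i) (hF : ∀ x ∈ F.labels, x.val ≠ 0)
    (hcover : ∀ x, T.Under v i x → x ∈ F.labels) : T.forest v i = F := by
  induction F generalizing v i with
  | nil =>
    refine PlaneForest.labels_eq_zero.1 (Multiset.eq_zero_of_forall_notMem fun x hx => ?_)
    simpa [PlaneForest.labels] using hcover x (mem_labels_forest.1 hx)
  | cons a c s ihc ihs =>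
    obtain ⟨⟨hpa, hra⟩, hc, hs⟩ := h
    simp only [PlaneForest.mem_labels_cons] at hF hcover
    have ha : T.IsChild a v := ⟨hF a (Or.inl rfl), hpa⟩
    have hFc : ∀ x ∈ c.labels, x.val ≠ 0 := fun x hx => hF x (by tauto)
    have hFs : ∀ x ∈ s.labels, x.val ≠ 0 := fun x hx => hF x (by tauto)
    have hunder (x : Fin n) := ha.under_iff (x := x) hra
    have hdisj {x : Fin n} (hx : T.Under a 0 x) : ¬T.Under v (i + 1) x :=
      ha.not_under_add_one hra hx.exists_iterate_parent_eq.choose_spec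
    have hcoverc : ∀ x, T.Under a 0 x → x ∈ c.labels := fun x hx => by
      rcases hcover x ((hunder x).2 (by tauto)) with rfl | h | h
      exacts [absurd hx (not_under_self _ _), h, absurd (under_of_mem_labels hs hFs h) (hdisj hx)]
    have hcovers : ∀ x, T.Under v (i + 1) x → x ∈ s.labels := fun x hx => by
      rcases hcover x ((hunder x).2 (by tauto)) with rfl | h | h
      exacts [absurd hx (ha.not_under_add_one hra (k := 0) rfl),
        absurd hx (hdisj (under_of_mem_labels hc hFc h)), h]
    rw [ha.forest_eq hra, ihc hc hFc hcoverc, ihs hs hFs hcovers]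

end Forest

section Root

variable {n : ℕ} (T : PlanarTree (n + 1))

lemma under_zero_iff {x : Fin (n + 1)} : T.Under 0 0 x ↔ x ≠ 0 := by
  constructor
  · rintro h rfl
    exact not_under_self _ _ h
  · intro hx
    obtain ⟨k, -, hk⟩ := T.2.2.1 x
    exact (eq_or_under_of_iterate_parent (Fin.ext hk)).resolve_left hx

lemma labels_forest_zero : (T.forest 0 0).labels = (Finset.univ.erase (0 : Fin (n + 1))).val := by
  refine (Multiset.Nodup.ext (T.nodup_labels_forest 0 0) (Finset.nodup _)).2 fun x => ?_
  rw [mem_labels_forest, under_zero_iff, Finset.mem_val, Finset.mem_erase]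
  simp only [Finset.mem_univ, and_true]

lemma youngRoot_pos (hn : 1 ≤ n) : 0 < T.youngRoot := by
  have hchild : {c : Fin (n + 1) | T.IsChild c 0}.Nonempty := by
    have hlast : Fin.last n ≠ 0 := mt Fin.last_eq_zero_iff.1 (by omega)
    obtain ⟨c, hc, -⟩ := T.under_zero_iff.2 hlast
    exact ⟨c, hc⟩
  obtain ⟨c, hc, hmax⟩ := Set.exists_max_image _ T.1.2 (Set.toFinite _) hchild
  refine (Set.ncard_pos (Set.toFinite _)).2 ⟨c, hc.1, congrArg Fin.val hc.2, ?_⟩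
  rintro ⟨-, d, hd, hdc, hlt, -⟩
  exact (hmax d ⟨hd, hdc.trans hc.2⟩).not_gt hlt

lemma card_filter_elder [DecidablePred T.Elder] :
    ((Finset.univ.erase 0).filter T.Elder).card = T.eld := by
  rw [eld, ← Set.ncard_coe_finset]
  congr 1
  ext c
  simp only [Finset.coe_filter, Finset.mem_erase, Finset.mem_univ, and_true, Set.mem_ofPred_eq,
    and_iff_right_iff_imp]
  exact fun h => Fin.val_ne_zero_iff.1 h.1

lemma card_filter_improper [DecidablePred T.Elder] :
    (((Finset.univ.erase 0).filter (¬T.Elder ·)).filter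
      fun c => T.beta c < (T.1.1 c).val).card = T.impe := by
  rw [impe, ← Set.ncard_coe_finset]
  congr 1
  ext c
  simp [ImproperEdge, and_assoc]

lemma card_filter_youngRoot [DecidablePred T.Elder] :
    ((((Finset.univ.erase 0).filter (¬T.Elder ·)).filter
      fun c => ¬T.beta c < (T.1.1 c).val).filter (T.1.1 · = 0)).card = T.youngRoot := by
  rw [youngRoot, ← Set.ncard_coe_finset]
  congr 1
  ext c
  simp only [Finset.coe_filter, Finset.mem_filter, Finset.mem_erase, Finset.mem_univ, and_true,
    Set.mem_ofPred_eq, Fin.val_eq_zero_iff, ne_eq]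
  have hroot (h : T.1.1 c = 0) : ¬T.beta c < (T.1.1 c).val := by simp [h]
  tauto

lemma prod_vertexWeight {R : Type*} [CommSemiring R] (x y z t : R) :
    ∏ c ∈ Finset.univ.erase 0, T.vertexWeight y t (fun v => if v = 0 then x else z) c =
      x ^ T.youngRoot * t ^ T.eld * y ^ T.impe * z ^ (n - T.youngRoot - T.eld - T.impe) := by
  classical
  set U := Finset.univ.erase (0 : Fin (n + 1)) with hU
  set Y := U.filter (¬T.Elder ·) with hY
  set P := Y.filter fun c => ¬T.beta c < (T.1.1 c).val with hP
  have held : (U.filter T.Elder).card = T.eld := T.card_filter_elder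
  have himpe : (Y.filter fun c => T.beta c < (T.1.1 c).val).card = T.impe :=
    T.card_filter_improper
  have hyoung : (P.filter (T.1.1 · = 0)).card = T.youngRoot := T.card_filter_youngRoot
  have hcardU : T.eld + Y.card = n := by
    rw [← held, hY, Finset.card_filter_add_card_filter_not, hU, Finset.card_erase_of_mem
      (Finset.mem_univ _), Finset.card_univ, Fintype.card_fin, Nat.add_sub_cancel]
  have hcardY : T.impe + P.card = Y.card := by
    rw [← himpe, hP, Finset.card_filter_add_card_filter_not]
  have hcardP : T.youngRoot + (P.filter (¬T.1.1 · = 0)).card = P.card := by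
    rw [← hyoung, Finset.card_filter_add_card_filter_not]
  have hrest : (P.filter (¬T.1.1 · = 0)).card = n - T.youngRoot - T.eld - T.impe := by omega
  simp only [vertexWeight, Finset.prod_ite, Finset.prod_const]
  rw [← hY, ← hP, held, himpe, hyoung, hrest]
  ring

lemma forest_zero_injective :
    Injective fun T : PlanarTree (n + 1) => T.forest 0 0 := by
  intro T T' (h : T.forest 0 0 = T'.forest 0 0)
  have heq (x : Fin (n + 1)) : T.1.1 x = T'.1.1 x ∧ T.1.2 x = T'.1.2 x := by
    by_cases hx : x = 0
    · have hx : x.val = 0 := congrArg Fin.val hx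
      exact ⟨(T.2.1 x hx).trans (T'.2.1 x hx).symm,
        Fin.ext ((T.2.2.2.1 x hx).trans (T'.2.2.2.1 x hx).symm)⟩
    · have := (T.encodedBy_forest 0 0).parent_eq_and_rank_eq (h ▸ T'.encodedBy_forest 0 0)
        (mem_labels_forest.2 (T.under_zero_iff.2 hx))
      exact this.imp_right Fin.ext
  exact Subtype.ext (Prod.ext (funext fun x => (heq x).1) (funext fun x => (heq x).2))

lemma exists_forest_zero_eq {F : PlaneForest (Fin (n + 1))}
    (hF : F.labels = (Finset.univ.erase (0 : Fin (n + 1))).val) :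
    ∃ T : PlanarTree (n + 1), T.forest 0 0 = F := by
  have hmem {x : Fin (n + 1)} : x ∈ F.labels ↔ x.val ≠ 0 := by
    rw [hF, Finset.mem_val, Finset.mem_erase, Fin.val_ne_zero_iff]
    simp only [Finset.mem_univ, and_true]
  have hcard : F.labels.card = n := by simp [hF]
  have hnodup : F.labels.Nodup := hF ▸ Finset.nodup _
  have hzero : (0 : Fin (n + 1)) ∉ F.labels := fun h => hmem.1 h rfl
  obtain ⟨p, r, henc, hout⟩ := PlaneForest.exists_encodedBy hnodup 0 0
  have hroot {x : Fin (n + 1)} (hx : x.val = 0) : p x = 0 ∧ r x = 0 :=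
    hout x fun h => hmem.1 h hx
  have hlt (x : Fin (n + 1)) : r x < n + 1 := by
    by_cases hx : x.val = 0
    · rw [(hroot hx).2]; exact n.succ_pos
    · have := henc.rank_lt (hmem.2 hx)
      omega
  refine ⟨⟨⟨p, fun x => ⟨r x, hlt x⟩⟩, fun x hx => ?_, fun x => ?_, fun x hx => (hroot hx).2,
    fun c d hc hd hp hr => ?_, fun c hc j hj => ?_⟩, ?_⟩
  · exact (hroot hx).1.trans (Fin.val_eq_zero_iff.1 hx).symm
  · by_cases hx : x.val = 0
    · exact ⟨0, n.succ_pos, hx⟩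
    · obtain ⟨k, hk, hkx⟩ := henc.exists_iterate_eq (hmem.2 hx)
      exact ⟨k, by omega, congrArg Fin.val hkx⟩
  · exact henc.eq_of_parent_eq_of_rank_eq hnodup hzero (hmem.2 hc) (hmem.2 hd) hp
      (congrArg Fin.val hr)
  · obtain ⟨d, hd, hdc, hdj⟩ := henc.exists_rank_eq (hmem.2 hc) hj fun _ => j.val.zero_le
    exact ⟨d, hmem.1 hd, hdc, Fin.ext hdj⟩
  · refine forest_eq_of_encodedBy henc (fun x => hmem.1) fun x hx => hmem.2 ?_
    exact Fin.val_ne_zero_iff.2 ((under_zero_iff _).1 hx)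

lemma sum_forest_zero {M : Type*} [AddCommMonoid M] (f : PlaneForest (Fin (n + 1)) → M) :
    ∑ T : PlanarTree (n + 1), f (T.forest 0 0) =
      ∑ F ∈ PlaneForest.forestsOn (Finset.univ.erase (0 : Fin (n + 1))), f F := by
  refine Finset.sum_bij (fun T _ => T.forest 0 0)
    (fun T _ => PlaneForest.mem_forestsOn.2 T.labels_forest_zero)
    (fun T _ T' _ h => forest_zero_injective h) (fun F hF => ?_) fun _ _ => rfl
  obtain ⟨T, hT⟩ := exists_forest_zero_eq (PlaneForest.mem_forestsOn.1 hF)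
  exact ⟨T, Finset.mem_univ _, hT⟩

lemma polyWeight_forest_zero (T : PlanarTree (n + 1)) :
    (T.forest 0 0).polyWeight 0 = X 0 ^ T.youngRoot * X 3 ^ T.eld * X 1 ^ T.impe *
      X 2 ^ (n - T.youngRoot - T.eld - T.impe) := by
  rw [PlaneForest.polyWeight, weight_forest, labels_forest_zero]
  exact T.prod_vertexWeight _ _ _ _

end Root

end PlanarTree

/-- (Guo–Zeng) For every `n ≥ 1`,
`Q_n(x,y,z,t) = Σ_{T ∈ O_{n+1}} x^{young_T(1)-1} t^{eld T} y^{impe T}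
  z^{n - young_T(1) - eld T - impe T}`. -/
theorem Qpoly_eq_sum_planarTree (n : ℕ) (hn : 1 ≤ n) :
    Qpoly n = ∑ T : PlanarTree (n + 1),
      (X 0 : MvPolynomial (Fin 4) ℚ) ^ (T.youngRoot - 1) * X 3 ^ T.eld * X 1 ^ T.impe
        * X 2 ^ (n - T.youngRoot - T.eld - T.impe) := by
  have hcard : (Finset.univ.erase (0 : Fin (n + 1))).card = n := by simp
  refine mul_left_cancel₀ (X_ne_zero (R := ℚ) (0 : Fin 4)) ?_
  calc X 0 * Qpoly n
      = ∑ F ∈ PlaneForest.forestsOn (Finset.univ.erase (0 : Fin (n + 1))), F.polyWeight 0 := by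
        rw [PlaneForest.sum_polyWeight_forestsOn (Finset.card_pos.1 (hcard.symm ▸ hn))
          fun x hx => Fin.pos_iff_ne_zero.2 (Finset.ne_of_mem_erase hx), hcard]
    _ = ∑ T : PlanarTree (n + 1), X 0 ^ T.youngRoot * X 3 ^ T.eld * X 1 ^ T.impe *
          X 2 ^ (n - T.youngRoot - T.eld - T.impe) := by
        rw [← PlanarTree.sum_forest_zero]
        exact Finset.sum_congr rfl fun T _ => T.polyWeight_forest_zero
    _ = _ := by
        rw [Finset.mul_sum]
        refine Finset.sum_congr rfl fun T _ => ?_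
        rw [← mul_pow_sub_one (T.youngRoot_pos hn).ne' (X 0)]
        ring

end
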